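/- Let 0 < δ ≤ Δ, let v_A and v_B be value densities, and let k ≥ 1 be an integer. Let 0 = x₁ < x₂ < ⋯ < x_n = 1 and v > 0 satisfy V_A([x_i, x_{i+1}]) ≤ v for all i ∈ {1, …, n−1}. Then for every alternating partition (Y_A, Y_B) induced by k cut points with V_B(Y_B) ≥ 1/2, there exists an alternating partition (Z_A, Z_B) induced by k cut points all belonging to {x₁, …, x_n} such that V_B(Z_B) ≥ 1/2 and V_A(Z_A) ≥ V_A(Y_A) − k·v. In particular, there exists an alternating partition (Z_A, Z_B) induced by k cut points in {x₁, …, x_n} with V_B(Z_B) ≥ 1/2 and V_A(Z_A) ≥ u_A^*(k) − k·v. -/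

import Mathlib

open MeasureTheory Set

noncomputable section

attribute [local instance] Classical.propDecidable

/-- A value density: measurable, bounded in `[δ, Δ]` on `[0,1]`, integrating to 1 on `[0,1]`. -/
def IsValueDensity (δ Δ : ℝ) (v : ℝ → ℝ) : Prop :=
  Measurable v ∧ (∀ x ∈ Set.Icc (0:ℝ) 1, v x ∈ Set.Icc δ Δ) ∧
    (∫ x in Set.Icc (0:ℝ) 1, v x) = 1

/-- The value of a piece `S` under density `v`. -/
def pieceVal (v : ℝ → ℝ) (S : Set ℝ) : ℝ := ∫ x in S, v x

/-- Extended cut points: `0, c 0, …, c (k-1), 1`. -/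
def extCuts (k : ℕ) (c : Fin k → ℝ) : ℕ → ℝ := fun i =>
  if i = 0 then 0 else if h : i - 1 < k then c ⟨i - 1, h⟩ else 1

/-- A valid vector of `k` cut points: nondecreasing, within `[0,1]`. -/
def ValidCuts (k : ℕ) (c : Fin k → ℝ) : Prop :=
  Monotone c ∧ ∀ i, c i ∈ Set.Icc (0:ℝ) 1

/-- The two pieces of the alternating partition induced by cuts `c`:
`true` gives the union of even-indexed intervals, `false` the odd-indexed ones. -/
def altPiece (k : ℕ) (c : Fin k → ℝ) (b : Bool) : Set ℝ :=
  ⋃ i ∈ Finset.range (k + 1),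
    if decide (i % 2 = 0) = b then Set.Icc (extCuts k c i) (extCuts k c (i + 1)) else ∅

/-- Alice's Stackelberg value with `k` cuts: max of `V_A(Z_A)` over alternating partitions
`(Z_A, Z_B)` induced by `k` cut points with `V_B(Z_B) ≥ 1/2`. -/
def stackelbergValue (k : ℕ) (vA vB : ℝ → ℝ) : ℝ :=
  sSup { u : ℝ | ∃ (c : Fin k → ℝ) (b : Bool), ValidCuts k c ∧
    1 / 2 ≤ pieceVal vB (altPiece k c (!b)) ∧ u = pieceVal vA (altPiece k c b) }

/-- A history of play: the list of (Alice's cuts, Bob's choice) in past rounds. -/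
abbrev Hist (k : ℕ) := List ((Fin k → ℝ) × Bool)

/-- Alice's deterministic strategy: horizon and history ↦ next cut vector. -/
abbrev AliceStrategy (k : ℕ) := ℕ → Hist k → (Fin k → ℝ)

/-- Bob's deterministic strategy: horizon, history, and Alice's current cuts ↦ choice. -/
abbrev BobStrategy (k : ℕ) := ℕ → Hist k → (Fin k → ℝ) → Bool

/-- The history of play after `t` rounds. -/
def playHist (k : ℕ) (SA : AliceStrategy k) (SB : BobStrategy k) (T : ℕ) : ℕ → Hist k
  | 0 => []
  | t + 1 =>
      let h := playHist k SA SB T t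
      let cuts := SA T h
      h ++ [(cuts, SB T h cuts)]

/-- Alice's cuts in round `t` (0-indexed). -/
def roundCuts (k : ℕ) (SA : AliceStrategy k) (SB : BobStrategy k) (T t : ℕ) : Fin k → ℝ :=
  SA T (playHist k SA SB T t)

/-- Bob's choice in round `t` (0-indexed). -/
def roundChoice (k : ℕ) (SA : AliceStrategy k) (SB : BobStrategy k) (T t : ℕ) : Bool :=
  SB T (playHist k SA SB T t) (roundCuts k SA SB T t)

/-- Alice's Stackelberg regret over horizon `T`: in each round she receives the value of
the piece Bob did not choose. -/
def aliceRegret (k : ℕ) (vA vB : ℝ → ℝ) (SA : AliceStrategy k) (SB : BobStrategy k)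
    (T : ℕ) : ℝ :=
  ∑ t ∈ Finset.range T,
    (stackelbergValue k vA vB -
      pieceVal vA (altPiece k (roundCuts k SA SB T t) (!(roundChoice k SA SB T t))))

/-- Bob's regret over horizon `T` relative to always choosing his preferred piece. -/
def bobRegret (k : ℕ) (vB : ℝ → ℝ) (SA : AliceStrategy k) (SB : BobStrategy k) (T : ℕ) : ℝ :=
  ∑ t ∈ Finset.range T,
    (max (pieceVal vB (altPiece k (roundCuts k SA SB T t) true))
        (pieceVal vB (altPiece k (roundCuts k SA SB T t) false)) -
      pieceVal vB (altPiece k (roundCuts k SA SB T t) (roundChoice k SA SB T t)))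

/-- Bob's strategy guarantees regret at most `R T` against every Alice strategy and horizon. -/
def BobGuarantees (k : ℕ) (vB : ℝ → ℝ) (SB : BobStrategy k) (R : ℕ → ℝ) : Prop :=
  ∀ (SA : AliceStrategy k) (T : ℕ), bobRegret k vB SA SB T ≤ R T

/-- The myopic Bob: chooses the piece of larger `V_B`-value, breaking ties towards
the piece of smaller `V_A`-value. -/
def myopicBob (k : ℕ) (vA vB : ℝ → ℝ) : BobStrategy k := fun _ _ c =>
  if pieceVal vB (altPiece k c false) < pieceVal vB (altPiece k c true) then true
  else if pieceVal vB (altPiece k c true) < pieceVal vB (altPiece k c false) then false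
  else if pieceVal vA (altPiece k c true) ≤ pieceVal vA (altPiece k c false) then true
  else false

/-- Alice's strategy always produces valid cut vectors. -/
def AliceValid (k : ℕ) (SA : AliceStrategy k) : Prop := ∀ T h, ValidCuts k (SA T h)

/-- Cumulative value. -/
def cumVal (v : ℝ → ℝ) (t : ℝ) : ℝ := ∫ s in (0:ℝ)..t, v s

lemma IsValueDensity.integrableOn {δ Δ : ℝ} {v : ℝ → ℝ} (h : IsValueDensity δ Δ v) :
    IntegrableOn v (Set.Icc (0:ℝ) 1) := by
  refine Measure.integrableOn_of_bounded (M := max |δ| |Δ|) (by simp)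
    h.1.aestronglyMeasurable ?_
  refine (ae_restrict_iff' measurableSet_Icc).2 (Filter.Eventually.of_forall fun x hx => ?_)
  exact abs_le_max_abs_abs (h.2.1 x hx).1 (h.2.1 x hx).2

lemma IsValueDensity.icc {δ Δ : ℝ} {v : ℝ → ℝ} (h : IsValueDensity δ Δ v) {a b : ℝ}
    (h0 : 0 ≤ a) (hab : a ≤ b) (h1 : b ≤ 1) :
    ∫ x in Set.Icc a b, v x = cumVal v b - cumVal v a := by
  have hi : ∀ c d : ℝ, 0 ≤ c → c ≤ d → d ≤ 1 → IntervalIntegrable v volume c d := by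
    intro c d hc hcd hd
    rw [intervalIntegrable_iff_integrableOn_Icc_of_le hcd]
    exact h.integrableOn.mono_set (Set.Icc_subset_Icc hc hd)
  unfold cumVal
  rw [intervalIntegral.integral_interval_sub_left (hi 0 b le_rfl (h0.trans hab) h1)
    (hi 0 a le_rfl h0 (hab.trans h1)), intervalIntegral.integral_of_le hab,
    integral_Icc_eq_integral_Ioc]

lemma IsValueDensity.cum_mono {δ Δ : ℝ} {v : ℝ → ℝ} (hδ : 0 < δ) (h : IsValueDensity δ Δ v)
    {a b : ℝ} (h0 : 0 ≤ a) (hab : a ≤ b) (h1 : b ≤ 1) : cumVal v a ≤ cumVal v b := by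
  have h2 := h.icc h0 hab h1
  have h3 : 0 ≤ ∫ x in Set.Icc a b, v x :=
    setIntegral_nonneg measurableSet_Icc fun x hx =>
      hδ.le.trans (h.2.1 x ⟨h0.trans hx.1, hx.2.trans h1⟩).1
  linarith

lemma IsValueDensity.cum_zero (v : ℝ → ℝ) : cumVal v 0 = 0 := by
  simp [cumVal]

lemma IsValueDensity.cum_one {δ Δ : ℝ} {v : ℝ → ℝ} (h : IsValueDensity δ Δ v) :
    cumVal v 1 = 1 := by
  have h2 := h.icc le_rfl zero_le_one le_rfl
  rw [h.2.2, IsValueDensity.cum_zero] at h2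
  linarith

lemma union_val {δ Δ : ℝ} {v : ℝ → ℝ} (h : IsValueDensity δ Δ v) (e : ℕ → ℝ)
    (he : Monotone e) (he0 : ∀ i, 0 ≤ e i) (he1 : ∀ i, e i ≤ 1) (P : ℕ → Prop) (m : ℕ) :
    ∫ x in (⋃ i ∈ Finset.range m, if P i then Set.Icc (e i) (e (i + 1)) else ∅), v x
      = ∑ i ∈ Finset.range m, if P i then cumVal v (e (i+1)) - cumVal v (e i) else 0 := by
  induction m with
  | zero => simp
  | succ m ih =>
    rw [Finset.sum_range_succ, ← ih, Finset.range_add_one, Finset.set_biUnion_insert]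
    by_cases hP : P m
    · rw [if_pos hP, if_pos hP, ← h.icc (he0 m) (he (Nat.le_succ m)) (he1 _), Set.union_comm]
      have hsub : (⋃ i ∈ Finset.range m, if P i then Set.Icc (e i) (e (i + 1)) else ∅)
          ⊆ Set.Icc 0 (e m) := by
        intro y hy
        simp only [Set.mem_iUnion, Finset.mem_range] at hy
        obtain ⟨i, hi, hy⟩ := hy
        split_ifs at hy with hPi
        · exact ⟨(he0 i).trans hy.1, hy.2.trans (he (by omega))⟩
        · exact absurd hy (Set.notMem_empty y)
      refine setIntegral_union₀ ?_ measurableSet_Icc.nullMeasurableSet ?_ ?_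
      · refine measure_mono_null (t := {e m}) ?_ (by simp)
        rintro y ⟨hy1, hy2⟩
        exact le_antisymm (hsub hy1).2 hy2.1
      · exact h.integrableOn.mono_set (hsub.trans (Set.Icc_subset_Icc le_rfl (he1 m)))
      · exact h.integrableOn.mono_set (Set.Icc_subset_Icc (he0 m) (he1 _))
    · simp [hP]

lemma extCuts_mono {k : ℕ} {c : Fin k → ℝ} (hc : ValidCuts k c) :
    Monotone (extCuts k c) ∧ (∀ i, 0 ≤ extCuts k c i) ∧ (∀ i, extCuts k c i ≤ 1) := by
  have h0 : ∀ i, 0 ≤ extCuts k c i := by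
    intro i; unfold extCuts; split_ifs
    · exact le_rfl
    · exact (hc.2 _).1
    · exact zero_le_one
  have h1 : ∀ i, extCuts k c i ≤ 1 := by
    intro i; unfold extCuts; split_ifs
    · exact zero_le_one
    · exact (hc.2 _).2
    · exact le_rfl
  refine ⟨fun i j hij => ?_, h0, h1⟩
  by_cases hi : i = 0
  · subst hi; simpa [extCuts] using h0 j
  by_cases hj : j - 1 < k
  · have hi' : i - 1 < k := by omega
    have hj0 : j ≠ 0 := by omega
    simp only [extCuts, hi, hj0, hi', hj, if_false, dif_pos]
    exact hc.1 (by simp only [Fin.mk_le_mk]; omega)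
  · have hj0 : j ≠ 0 := by omega
    have : extCuts k c j = 1 := by simp [extCuts, hj0, hj]
    rw [this]; exact h1 i

lemma alt_val {δ Δ : ℝ} {v : ℝ → ℝ} (h : IsValueDensity δ Δ v) {k : ℕ} {c : Fin k → ℝ}
    (hc : ValidCuts k c) (b : Bool) :
    pieceVal v (altPiece k c b) = ∑ i ∈ Finset.range (k+1),
      if decide (i % 2 = 0) = b then
        cumVal v (extCuts k c (i+1)) - cumVal v (extCuts k c i) else 0 := by
  obtain ⟨hm, h0, h1⟩ := extCuts_mono hc
  have := union_val h (extCuts k c) hm h0 h1 (fun i => decide (i % 2 = 0) = b) (k+1)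
  unfold pieceVal altPiece
  convert this

lemma alt_add {δ Δ : ℝ} {v : ℝ → ℝ} (h : IsValueDensity δ Δ v) {k : ℕ} {c : Fin k → ℝ}
    (hc : ValidCuts k c) (b : Bool) :
    pieceVal v (altPiece k c b) + pieceVal v (altPiece k c (!b)) = 1 := by
  rw [alt_val h hc, alt_val h hc, ← Finset.sum_add_distrib]
  have : ∀ i ∈ Finset.range (k+1), ((if decide (i % 2 = 0) = b then
        cumVal v (extCuts k c (i+1)) - cumVal v (extCuts k c i) else 0) +
      (if decide (i % 2 = 0) = !b then
        cumVal v (extCuts k c (i+1)) - cumVal v (extCuts k c i) else 0))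
      = cumVal v (extCuts k c (i+1)) - cumVal v (extCuts k c i) := by
    intro i _
    by_cases hi : i % 2 = 0 <;> cases b <;> simp [hi]
  rw [Finset.sum_congr rfl this, Finset.sum_range_sub (fun i => cumVal v (extCuts k c i))]
  have e0 : extCuts k c 0 = 0 := by simp [extCuts]
  have e1 : extCuts k c (k+1) = 1 := by simp [extCuts]
  rw [e0, e1, h.cum_one, IsValueDensity.cum_zero]; ring

/-- Rounding functions. -/
lemma exists_round (F : ℝ → ℝ) (hF : ∀ a b, 0 ≤ a → a ≤ b → b ≤ 1 → F a ≤ F b)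
    (n : ℕ) (hn : 2 ≤ n) (x : ℕ → ℝ) (hx1 : x 1 = 0) (hxn : x n = 1)
    (hmono : ∀ i, 1 ≤ i → i < n → x i < x (i + 1))
    (v : ℝ) (hv : 0 < v)
    (hsmall : ∀ i, 1 ≤ i → i < n → F (x (i+1)) - F (x i) ≤ v) :
    ∃ U D : ℝ → ℝ,
      (∀ y, 0 ≤ y → y ≤ 1 → ∃ j, 1 ≤ j ∧ j ≤ n ∧ U y = x j) ∧
      (∀ y, 0 ≤ y → y ≤ 1 → ∃ j, 1 ≤ j ∧ j ≤ n ∧ D y = x j) ∧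
      (∀ y, 0 ≤ y → y ≤ 1 → y ≤ U y ∧ U y ≤ 1 ∧ F (U y) - F y ≤ v) ∧
      (∀ y, 0 ≤ y → y ≤ 1 → D y ≤ y ∧ 0 ≤ D y ∧ F y - F (D y) ≤ v) ∧
      (∀ y z, 0 ≤ y → y ≤ z → z ≤ 1 → U y ≤ U z) ∧ U 0 = 0 ∧ D 1 = 1 := by
  have hle : ∀ i j, 1 ≤ i → i ≤ j → j ≤ n → x i ≤ x j := by
    intro i j hi hij hj
    induction j, hij using Nat.le_induction with
    | base => exact le_rfl
    | succ j hij ih => exact (ih (by omega)).trans (hmono j (by omega) (by omega)).le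
  have hx0 : ∀ i, 1 ≤ i → i ≤ n → 0 ≤ x i := fun i h1 h2 => hx1 ▸ hle 1 i le_rfl h1 h2
  have hx1' : ∀ i, 1 ≤ i → i ≤ n → x i ≤ 1 := fun i h1 h2 => hxn ▸ hle i n h1 h2 le_rfl
  have hU : ∀ y, ∃ u, 0 ≤ y → y ≤ 1 → (∃ j, 1 ≤ j ∧ j ≤ n ∧ u = x j ∧ y ≤ x j ∧
      (∀ i, 1 ≤ i → i < j → x i < y)) := by
    intro y
    by_cases hy : y ≤ 1
    · have hex : ∃ j, 1 ≤ j ∧ y ≤ x j := ⟨n, by omega, hxn ▸ hy⟩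
      refine ⟨x (Nat.find hex), fun _ _ => ⟨Nat.find hex, (Nat.find_spec hex).1,
        Nat.find_min' hex ⟨by omega, hxn ▸ hy⟩, rfl, (Nat.find_spec hex).2, ?_⟩⟩
      intro i hi hij
      have := Nat.find_min hex hij
      by_contra hcon
      exact this ⟨hi, not_lt.1 hcon⟩
    · exact ⟨0, fun _ h => absurd h hy⟩
  choose U hU using hU
  have hD : ∀ y, ∃ d, 0 ≤ y → y ≤ 1 → (∃ j, 1 ≤ j ∧ j ≤ n ∧ d = x j) ∧
      (d ≤ y ∧ 0 ≤ d ∧ F y - F d ≤ v) ∧ (y = 1 → d = 1) := by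
    intro y
    by_cases hy : 0 ≤ y ∧ y ≤ 1
    · obtain ⟨j, hj1, hjn, -, hyj, hmin⟩ := hU y hy.1 hy.2
      by_cases heq : y = x j
      · refine ⟨y, fun _ _ => ⟨⟨j, hj1, hjn, heq⟩, ⟨le_rfl, hy.1, ?_⟩, id⟩⟩
        rw [sub_self]; exact hv.le
      · have hj2 : 2 ≤ j := by
          by_contra hcon
          have : j = 1 := by omega
          subst this
          exact heq (le_antisymm hyj (hx1 ▸ hy.1))
        obtain ⟨i, rfl⟩ : ∃ i, j = i + 1 := ⟨j - 1, by omega⟩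
        have h3 := hmin i (by omega) (by omega)
        refine ⟨x i, fun _ _ => ⟨⟨i, by omega, by omega, rfl⟩,
          ⟨h3.le, hx0 i (by omega) (by omega), ?_⟩, ?_⟩⟩
        · have h4 := hsmall i (by omega) (by omega)
          have h5 := hF y (x (i+1)) hy.1 hyj (hx1' _ hj1 hjn)
          linarith
        · intro h1
          exact absurd (le_antisymm hyj (h1 ▸ hx1' _ hj1 hjn)) heq
    · exact ⟨0, fun h h' => absurd ⟨h, h'⟩ hy⟩
  choose D hD using hD
  refine ⟨U, D, ?_, fun y h0 h1 => (hD y h0 h1).1, ?_, fun y h0 h1 => (hD y h0 h1).2.1, ?_, ?_,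
    (hD 1 zero_le_one le_rfl).2.2 rfl⟩
  · intro y h0 h1
    obtain ⟨j, a, b, c, -⟩ := hU y h0 h1
    exact ⟨j, a, b, c⟩
  · intro y h0 h1
    obtain ⟨j, hj1, hjn, hu, hyj, hmin⟩ := hU y h0 h1
    rw [hu]
    refine ⟨hyj, hx1' j hj1 hjn, ?_⟩
    by_cases hj : j = 1
    · subst hj
      have : y = x 1 := le_antisymm hyj (hx1 ▸ h0)
      rw [this, sub_self]; exact hv.le
    · obtain ⟨i, rfl⟩ : ∃ i, j = i + 1 := ⟨j - 1, by omega⟩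
      have h3 := hmin i (by omega) (by omega)
      have h4 := hsmall i (by omega) (by omega)
      have h5 := hF (x i) y (hx0 i (by omega) (by omega)) h3.le h1
      linarith
  · intro y z h0 hyz h1
    obtain ⟨j, hj1, hjn, hu, hyj, hmin⟩ := hU y h0 (hyz.trans h1)
    obtain ⟨j', hj1', hjn', hu', hyj', hmin'⟩ := hU z (h0.trans hyz) h1
    rw [hu, hu']
    by_contra hcon
    have : j' < j := by
      by_contra h6
      exact hcon (hle j j' hj1 (not_lt.1 h6) hjn')
    have := hmin j' hj1' this
    linarith
  · obtain ⟨j, hj1, hjn, hu, hyj, hmin⟩ := hU 0 le_rfl zero_le_one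
    by_cases hj : j = 1
    · rw [hu, hj, hx1]
    · have := hmin 1 le_rfl (by omega)
      linarith

lemma loss_sum (k : ℕ) (P : ℕ → Prop) (hP : ∀ i, P (i+1) ↔ ¬ P i) (v : ℝ) :
    ∑ i ∈ Finset.range (k+1), (if P i then
      ((if i = 0 then 0 else v) + (if i = k then 0 else v)) else 0) = k * v := by
  have h1 : ∀ i ∈ Finset.range (k+1), (if P i then
      ((if i = 0 then 0 else v) + (if i = k then 0 else v)) else 0)
      = (if P i then (if i = 0 then 0 else v) else 0)
        + (if P i then (if i = k then 0 else v) else 0) := by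
    intro i _; split_ifs <;> simp
  rw [Finset.sum_congr rfl h1, Finset.sum_add_distrib, Finset.sum_range_succ',
    Finset.sum_range_succ (fun i => if P i then (if i = k then 0 else v) else 0)]
  simp only [if_true, ite_self, add_zero, Nat.succ_ne_zero, if_false]
  rw [← Finset.sum_add_distrib]
  have h2 : ∀ i ∈ Finset.range k, ((if P (i+1) then v else 0)
      + (if P i then (if i = k then 0 else v) else 0)) = v := by
    intro i hi
    have : i ≠ k := (Finset.mem_range.1 hi).ne
    by_cases h : P i <;> simp [hP, h, this]
  rw [Finset.sum_congr rfl h2]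
  simp

lemma discretize (δ Δ : ℝ) (hδ : 0 < δ)
    (vA vB : ℝ → ℝ) (hA : IsValueDensity δ Δ vA) (hB : IsValueDensity δ Δ vB)
    (k : ℕ)
    (n : ℕ) (hn : 2 ≤ n) (x : ℕ → ℝ) (hx1 : x 1 = 0) (hxn : x n = 1)
    (hmono : ∀ i, 1 ≤ i → i < n → x i < x (i + 1))
    (v : ℝ) (hv : 0 < v)
    (hsmall : ∀ i, 1 ≤ i → i < n → pieceVal vA (Set.Icc (x i) (x (i + 1))) ≤ v)
    (c : Fin k → ℝ) (hc : ValidCuts k c) (b : Bool)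
    (hbob : 1/2 ≤ pieceVal vB (altPiece k c (!b))) :
      ∃ c' : Fin k → ℝ, ValidCuts k c' ∧
        (∀ i : Fin k, ∃ j, 1 ≤ j ∧ j ≤ n ∧ c' i = x j) ∧
          1/2 ≤ pieceVal vB (altPiece k c' (!b)) ∧
          pieceVal vA (altPiece k c b) - k * v ≤ pieceVal vA (altPiece k c' b) := by
  have hle : ∀ i j, 1 ≤ i → i ≤ j → j ≤ n → x i ≤ x j := by
    intro i j hi hij hj
    induction j, hij using Nat.le_induction with
    | base => exact le_rfl
    | succ j hij ih => exact (ih (by omega)).trans (hmono j (by omega) (by omega)).le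
  have hx0 : ∀ i, 1 ≤ i → i ≤ n → 0 ≤ x i := fun i h1 h2 => hx1 ▸ hle 1 i le_rfl h1 h2
  have hx1' : ∀ i, 1 ≤ i → i ≤ n → x i ≤ 1 := fun i h1 h2 => hxn ▸ hle i n h1 h2 le_rfl
  obtain ⟨U, D, hUg, hDg, hU, hD, hUm, hU0, hD1⟩ := exists_round (cumVal vA)
    (fun a b h0 hab h1 => hA.cum_mono hδ h0 hab h1) n hn x hx1 hxn hmono v hv (by
      intro i h1 h2
      rw [← hA.icc (hx0 i h1 h2.le) (hmono i h1 h2).le (hx1' _ (by omega) (by omega))]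
      exact hsmall i h1 h2)
  obtain ⟨hem, he0, he1⟩ := extCuts_mono hc
  set e := extCuts k c with he
  have ez : e 0 = 0 := by simp [he, extCuts]
  have eo : e (k+1) = 1 := by simp [he, extCuts]
  set P : ℕ → Prop := fun i => decide (i % 2 = 0) = b with hPdef
  have hP : ∀ i, P (i+1) ↔ ¬ P i := by
    intro i
    simp only [hPdef]
    rcases Nat.mod_two_eq_zero_or_one i with h | h
    · have h' : (i+1) % 2 = 1 := by omega
      cases b <;> simp [h, h']
    · have h' : (i+1) % 2 = 0 := by omega
      cases b <;> simp [h, h']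
  let e' : ℕ → ℝ := fun i => if P i then U (e i) else
    if i = 0 then 0 else max (D (e i)) (U (e (i-1)))
  have e'P : ∀ i, P i → e' i = U (e i) := fun i h => by simp [e', h]
  have e'N : ∀ i, P i → e' (i+1) = max (D (e (i+1))) (U (e i)) := fun i h => by
    have : ¬ P (i+1) := fun h2 => (hP i).1 h2 h
    simp [e', this]
  have e'z : e' 0 = 0 := by
    by_cases h : P 0
    · rw [e'P 0 h, ez, hU0]
    · simp [e', h]
  have e'g : ∀ i, ∃ j, 1 ≤ j ∧ j ≤ n ∧ e' i = x j := by
    intro i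
    simp only [e']
    split_ifs
    · exact hUg _ (he0 _) (he1 _)
    · exact ⟨1, le_rfl, by omega, hx1.symm⟩
    · rcases max_choice (D (e i)) (U (e (i-1))) with h | h <;> rw [h]
      · exact hDg _ (he0 _) (he1 _)
      · exact hUg _ (he0 _) (he1 _)
  have e'0 : ∀ i, 0 ≤ e' i := fun i => by
    obtain ⟨j, h1, h2, h3⟩ := e'g i; rw [h3]; exact hx0 j h1 h2
  have e'1 : ∀ i, e' i ≤ 1 := fun i => by
    obtain ⟨j, h1, h2, h3⟩ := e'g i; rw [h3]; exact hx1' j h1 h2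
  have e'o : e' (k+1) = 1 := by
    refine le_antisymm (e'1 _) ?_
    by_cases h : P k
    · rw [e'N k h, eo, hD1]; exact le_max_left _ _
    · rw [e'P _ ((hP k).2 h), eo]; exact (hU 1 zero_le_one le_rfl).1
  have e'm : Monotone e' := by
    refine monotone_nat_of_le_succ fun i => ?_
    by_cases h : P i
    · rw [e'P i h, e'N i h]; exact le_max_right _ _
    · rw [e'P _ ((hP i).2 h)]
      simp only [e', h, if_false]
      split_ifs
      · exact (he0 (i+1)).trans (hU _ (he0 _) (he1 _)).1
      · refine max_le ?_ (hUm _ _ (he0 _) (hem (by omega)) (he1 _))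
        exact ((hD _ (he0 _) (he1 _)).1.trans (hem (Nat.le_succ i))).trans
          (hU _ (he0 _) (he1 _)).1
  have hc' : ValidCuts k (fun i : Fin k => e' (i+1)) :=
    ⟨fun i j hij => e'm (by simpa using hij), fun i => ⟨e'0 _, e'1 _⟩⟩
  have hext : ∀ i, i ≤ k + 1 → extCuts k (fun i : Fin k => e' (i+1)) i = e' i := by
    intro i hi
    by_cases h0 : i = 0
    · subst h0; simp [extCuts, e'z]
    by_cases h1 : i - 1 < k
    · have : i - 1 + 1 = i := by omega
      simp [extCuts, h0, h1, this]
    · have : i = k + 1 := by omega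
      subst this
      simp [extCuts, e'o]
  have hval : ∀ w, IsValueDensity δ Δ w →
      pieceVal w (altPiece k (fun i : Fin k => e' (i+1)) b) = ∑ i ∈ Finset.range (k+1),
        if P i then cumVal w (e' (i+1)) - cumVal w (e' i) else 0 := by
    intro w hw
    rw [alt_val hw hc' b]
    refine Finset.sum_congr rfl fun i hi => ?_
    have := Finset.mem_range.1 hi
    rw [hext i (by omega), hext (i+1) (by omega)]
  refine ⟨fun i => e' (i+1), hc', fun i => e'g _, ?_, ?_⟩
  · have h1 := alt_add hB hc b
    have h2 := alt_add hB hc' b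
    have h3 : pieceVal vB (altPiece k (fun i : Fin k => e' (i+1)) b)
        ≤ pieceVal vB (altPiece k c b) := by
      rw [hval vB hB, alt_val hB hc b]
      refine Finset.sum_le_sum fun i _ => ?_
      by_cases h : P i
      · have h' : decide (i % 2 = 0) = b := h
        rw [if_pos h, if_pos h', e'P i h, e'N i h]
        have hy := hU (e i) (he0 _) (he1 _)
        have hz := hD (e (i+1)) (he0 _) (he1 _)
        have hm := hB.cum_mono hδ (he0 i) (hem (Nat.le_succ i)) (he1 (i+1))
        rcases le_total (D (e (i+1))) (U (e i)) with h4 | h4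
        · rw [max_eq_right h4, sub_self]; exact sub_nonneg.2 hm
        · rw [max_eq_left h4]
          have h5 := hB.cum_mono hδ hz.2.1 hz.1 (he1 (i+1))
          have h6 := hB.cum_mono hδ (he0 i) hy.1 hy.2.1
          exact sub_le_sub h5 h6
      · have h' : ¬ decide (i % 2 = 0) = b := h
        rw [if_neg h, if_neg h']
    linarith
  · rw [hval vA hA, alt_val hA hc b, ← loss_sum k P hP v, ← Finset.sum_sub_distrib]
    refine Finset.sum_le_sum fun i _ => ?_
    by_cases h : P i
    · have h' : decide (i % 2 = 0) = b := h
      rw [if_pos h, if_pos h, if_pos h', e'P i h, e'N i h]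
      have hy := hU (e i) (he0 _) (he1 _)
      have hz := hD (e (i+1)) (he0 _) (he1 _)
      have hy' : cumVal vA (U (e i)) - cumVal vA (e i) ≤ if i = 0 then 0 else v := by
        split_ifs with h0
        · rw [h0, ez, hU0, sub_self]
        · exact hy.2.2
      have hz' : cumVal vA (e (i+1)) - cumVal vA (D (e (i+1))) ≤ if i = k then 0 else v := by
        split_ifs with h0
        · rw [h0, eo, hD1, sub_self]
        · exact hz.2.2
      have hmax : cumVal vA (D (e (i+1))) ≤ cumVal vA (max (D (e (i+1))) (U (e i))) :=
        hA.cum_mono hδ hz.2.1 (le_max_left _ _) (max_le (hz.1.trans (he1 _)) hy.2.1)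
      linarith
    · have h' : ¬ decide (i % 2 = 0) = b := h
      rw [if_neg h, if_neg h', if_neg h, sub_zero]


/-- discretization of Stackelberg cuts: given a grid
`0 = x₁ < x₂ < ⋯ < x_n = 1` whose consecutive intervals each have Alice-value at most `v`,
every alternating `k`-cut partition `(Y_A, Y_B)` with `V_B(Y_B) ≥ 1/2` can be replaced by
one with all cut points on the grid, still giving Bob at least `1/2` and losing Alice at
most `k·v`; in particular some grid partition is `(k·v)`-Stackelberg. -/
theorem stackelberg_discretization (δ Δ : ℝ) (hδ : 0 < δ) (hδΔ : δ ≤ Δ)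
    (vA vB : ℝ → ℝ) (hA : IsValueDensity δ Δ vA) (hB : IsValueDensity δ Δ vB)
    (k : ℕ) (hk : 1 ≤ k)
    (n : ℕ) (hn : 2 ≤ n) (x : ℕ → ℝ) (hx1 : x 1 = 0) (hxn : x n = 1)
    (hmono : ∀ i, 1 ≤ i → i < n → x i < x (i + 1))
    (v : ℝ) (hv : 0 < v)
    (hsmall : ∀ i, 1 ≤ i → i < n → pieceVal vA (Set.Icc (x i) (x (i + 1))) ≤ v) :
    (∀ c : Fin k → ℝ, ValidCuts k c → ∀ b : Bool,
      1/2 ≤ pieceVal vB (altPiece k c (!b)) →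
      ∃ c' : Fin k → ℝ, ValidCuts k c' ∧
        (∀ i : Fin k, ∃ j, 1 ≤ j ∧ j ≤ n ∧ c' i = x j) ∧
        ∃ b' : Bool,
          1/2 ≤ pieceVal vB (altPiece k c' (!b')) ∧
          pieceVal vA (altPiece k c b) - k * v ≤ pieceVal vA (altPiece k c' b')) ∧
    (∃ c' : Fin k → ℝ, ValidCuts k c' ∧
      (∀ i : Fin k, ∃ j, 1 ≤ j ∧ j ≤ n ∧ c' i = x j) ∧
      ∃ b' : Bool,
        1/2 ≤ pieceVal vB (altPiece k c' (!b')) ∧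
        stackelbergValue k vA vB - k * v ≤ pieceVal vA (altPiece k c' b')) := by
  have main := discretize δ Δ hδ vA vB hA hB k n hn x hx1 hxn hmono v hv hsmall
  refine ⟨fun c hc b hb => ?_, ?_⟩
  · obtain ⟨c', h1, h2, h3⟩ := main c hc b hb
    exact ⟨c', h1, h2, b, h3⟩
  set S : Set ((Fin k → ℝ) × Bool) := {p | ValidCuts k p.1 ∧
    (∀ i : Fin k, ∃ j, 1 ≤ j ∧ j ≤ n ∧ p.1 i = x j) ∧
    1/2 ≤ pieceVal vB (altPiece k p.1 (!p.2))} with hS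
  have hfin : S.Finite := by
    have h1 : (Set.pi Set.univ (fun _ : Fin k => x '' Set.Icc 1 n)).Finite :=
      Set.Finite.pi' (fun _ => (Set.finite_Icc 1 n).image x) |>.subset
        (fun f hf i => hf i (Set.mem_univ i))
    refine (h1.prod (Set.finite_univ (α := Bool))).subset ?_
    rintro ⟨c, b⟩ ⟨-, h, -⟩
    refine ⟨fun i _ => ?_, Set.mem_univ _⟩
    obtain ⟨j, hj1, hj2, hj3⟩ := h i
    exact ⟨j, ⟨hj1, hj2⟩, hj3.symm⟩
  have hex : ∃ (c : Fin k → ℝ) (b : Bool), ValidCuts k c ∧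
      1 / 2 ≤ pieceVal vB (altPiece k c (!b)) := by
    have hc : ValidCuts k (fun _ => 0) := ⟨fun _ _ _ => le_rfl, fun _ => ⟨le_rfl, zero_le_one⟩⟩
    have h1 := alt_add hB hc true
    rcases le_total (1/2) (pieceVal vB (altPiece k (fun _ => 0) (!true))) with h | h
    · exact ⟨_, true, hc, h⟩
    · refine ⟨_, false, hc, ?_⟩
      simp only [Bool.not_false]
      linarith
  obtain ⟨c0, b0, hc0, hb0⟩ := hex
  have hne : S.Nonempty := by
    obtain ⟨c', h1, h2, h3, -⟩ := main c0 hc0 b0 hb0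
    exact ⟨(c', b0), h1, h2, h3⟩
  obtain ⟨p, hp, hmax⟩ := Set.exists_max_image S (fun p => pieceVal vA (altPiece k p.1 p.2)) hfin hne
  refine ⟨p.1, hp.1, hp.2.1, p.2, hp.2.2, ?_⟩
  rw [sub_le_iff_le_add]
  refine csSup_le ⟨_, c0, b0, hc0, hb0, rfl⟩ ?_
  rintro u ⟨c, b, hc, hb, rfl⟩
  obtain ⟨c', h1, h2, h3, h4⟩ := main c hc b hb
  have h5 := hmax (c', b) ⟨h1, h2, h3⟩
  simp only at h5
  linarith

end
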